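/- Let 0<β<1. For h>0 and s>0 define F_h(s) = (sin(π(1−β))/π) ∫₀^s h^{1−β} (y+h)^{−1} y^{β−1} dy. Then for all 0<b<c and all r>0, ∫₀^b βx^{β−1} F_{b−x}(c−b) dx + (c^β − b^β) = ∫₀^{b+r} βx^{β−1} F_{b+r−x}(c−b) dx + ((c+r)^β − (b+r)^β). -/

import Mathlib

open MeasureTheory Real

/-- The distribution function of the overshoot of level `h` by a standard
`(1−β)`-stable subordinator:
`F_h(s) = (sin(π(1−β))/π) ∫₀^s h^{1−β} (y+h)^{−1} y^{β−1} dy`. -/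
noncomputable def overshootCDF (β h s : ℝ) : ℝ :=
  (Real.sin (Real.pi * (1 - β)) / Real.pi) *
    ∫ y in Set.Ioo (0 : ℝ) s, h ^ (1 - β) * (y + h)⁻¹ * y ^ (β - 1)

lemma os_beta (β : ℝ) (hβ0 : 0 < β) (hβ1 : β < 1) :
    ∫ x in Set.Ioo (0 : ℝ) 1, x ^ (β - 1) * (1 - x) ^ (-β) = π / Real.sin (π * β) := by
  have h1 : Complex.betaIntegral (β : ℂ) ((1 - β : ℝ) : ℂ)
      = ((∫ x in Set.Ioo (0 : ℝ) 1, x ^ (β - 1) * (1 - x) ^ (-β) : ℝ) : ℂ) := by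
    rw [Complex.betaIntegral, intervalIntegral.integral_of_le zero_le_one,
      integral_Ioc_eq_integral_Ioo, ← integral_complex_ofReal]
    refine setIntegral_congr_fun measurableSet_Ioo ?_
    intro x hx
    have hx1 : 0 ≤ 1 - x := by linarith [hx.2]
    simp only
    rw [Complex.ofReal_mul, Complex.ofReal_cpow hx.1.le, Complex.ofReal_cpow hx1]
    push_cast
    congr 2
    ring
  have h2 := ProbabilityTheory.beta_eq_betaIntegralReal β (1 - β) hβ0 (by linarith)
  rw [h1, Complex.ofReal_re] at h2
  rw [← h2, ProbabilityTheory.beta, Real.Gamma_mul_Gamma_one_sub]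
  simp

lemma os_cv (b : ℝ) (hb : 0 < b) (g : ℝ → ℝ) :
    ∫ x in Set.Ioo (0 : ℝ) b, g x
      = ∫ u in Set.Ioi (0 : ℝ), b / (1 + u) ^ 2 * g (b * u / (1 + u)) := by
  have him : (fun u : ℝ => b * u / (1 + u)) '' Set.Ioi 0 = Set.Ioo 0 b := by
    ext x
    constructor
    · rintro ⟨u, hu, rfl⟩
      have hu : 0 < u := hu
      refine ⟨by positivity, ?_⟩
      simp only
      rw [div_lt_iff₀ (by positivity)]
      nlinarith
    · rintro ⟨hx0, hxb⟩
      have hbx : 0 < b - x := by linarith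
      refine ⟨x / (b - x), by simp only [Set.mem_Ioi]; positivity, ?_⟩
      simp only
      have : 1 + x / (b - x) = b / (b - x) := by field_simp; ring
      rw [this]
      field_simp
  have hd : ∀ u ∈ Set.Ioi (0 : ℝ),
      HasDerivWithinAt (fun u : ℝ => b * u / (1 + u)) (b / (1 + u) ^ 2) (Set.Ioi 0) u := by
    intro u hu
    have hu : 0 < u := hu
    have h1 : HasDerivAt (fun u : ℝ => b * u) b u := by
      simpa using (hasDerivAt_id u).const_mul b
    have h2 : HasDerivAt (fun u : ℝ => 1 + u) 1 u := by
      simpa using (hasDerivAt_id u).const_add 1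
    have h3 := h1.div h2 (by positivity)
    refine HasDerivAt.hasDerivWithinAt ?_
    refine HasDerivAt.congr_deriv (f' := (b * (1 + u) - b * u * 1) / (1 + u) ^ 2) h3 ?_
    congr 1
    ring
  have hinj : Set.InjOn (fun u : ℝ => b * u / (1 + u)) (Set.Ioi 0) := by
    intro u hu v hv huv
    have hu : 0 < u := hu
    have hv : 0 < v := hv
    simp only at huv
    rw [div_eq_div_iff (by positivity) (by positivity)] at huv
    have : b * (u - v) = 0 := by linarith
    rcases mul_eq_zero.1 this with h | h
    · linarith
    · linarith
  rw [← him, integral_image_eq_integral_abs_deriv_smul measurableSet_Ioi hd hinj]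
  refine setIntegral_congr_fun measurableSet_Ioi ?_
  intro u hu
  have hu : 0 < u := hu
  simp only [smul_eq_mul]
  rw [abs_of_pos (by positivity)]

lemma os_pos (β : ℝ) (hβ0 : 0 < β) (hβ1 : β < 1) : 0 < Real.sin (π * β) := by
  apply Real.sin_pos_of_pos_of_lt_pi
  · have := Real.pi_pos; positivity
  · nlinarith [Real.pi_pos]

lemma os_mellin_one (β : ℝ) (hβ0 : 0 < β) (hβ1 : β < 1) :
    ∫ u in Set.Ioi (0 : ℝ), u ^ (β - 1) * (u + 1)⁻¹ = π / Real.sin (π * β) := by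
  rw [← os_beta β hβ0 hβ1, os_cv 1 one_pos]
  refine setIntegral_congr_fun measurableSet_Ioi ?_
  intro u hu
  have hu : 0 < u := hu
  have h1 : 0 < 1 + u := by positivity
  simp only [one_mul]
  have e : 1 - u / (1 + u) = (1 + u)⁻¹ := by field_simp; ring
  rw [e, Real.div_rpow hu.le h1.le, Real.inv_rpow h1.le, Real.rpow_neg h1.le, inv_inv,
    Real.rpow_sub_one h1.ne', add_comm u 1]
  have := Real.rpow_pos_of_pos h1 β
  field_simp

lemma os_mellin (β : ℝ) (hβ0 : 0 < β) (hβ1 : β < 1) (a : ℝ) (ha : 0 < a) :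
    ∫ u in Set.Ioi (0 : ℝ), u ^ (β - 1) * (u + a)⁻¹ = a ^ (β - 1) * (π / Real.sin (π * β)) := by
  have h := integral_comp_mul_left_Ioi' (fun u : ℝ => u ^ (β - 1) * (u + a)⁻¹) 0 ha
  rw [mul_zero] at h
  rw [← h, ← os_mellin_one β hβ0 hβ1, smul_eq_mul, ← integral_const_mul, ← integral_const_mul]
  refine setIntegral_congr_fun measurableSet_Ioi ?_
  intro u hu
  have hu : 0 < u := hu
  simp only
  rw [Real.mul_rpow ha.le hu.le]
  have : a * u + a = a * (u + 1) := by ring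
  rw [this, mul_inv]
  field_simp

lemma os_mellin_int (β : ℝ) (hβ0 : 0 < β) (hβ1 : β < 1) (a : ℝ) (ha : 0 < a) :
    IntegrableOn (fun u : ℝ => u ^ (β - 1) * (u + a)⁻¹) (Set.Ioi 0) := by
  by_contra hn
  have h := os_mellin β hβ0 hβ1 a ha
  rw [integral_undef hn] at h
  have := os_pos β hβ0 hβ1
  have := Real.rpow_pos_of_pos ha (β - 1)
  have := Real.pi_pos
  have : 0 < a ^ (β - 1) * (π / Real.sin (π * β)) := by positivity
  linarith

lemma os_inner (β : ℝ) (hβ0 : 0 < β) (hβ1 : β < 1) (b y : ℝ) (hb : 0 < b) (hy : 0 < y) :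
    ∫ x in Set.Ioo (0 : ℝ) b, x ^ (β - 1) * ((b - x) ^ (1 - β) * (y + (b - x))⁻¹)
      = (1 - ((y + b) / y) ^ (β - 1)) * (π / Real.sin (π * β)) := by
  have ha : 0 < (y + b) / y := by positivity
  rw [sub_mul, ← os_mellin β hβ0 hβ1 _ ha, one_mul, ← os_mellin_one β hβ0 hβ1,
    ← integral_sub (os_mellin_int β hβ0 hβ1 1 one_pos) (os_mellin_int β hβ0 hβ1 _ ha), os_cv b hb]
  refine setIntegral_congr_fun measurableSet_Ioi ?_
  intro u hu
  have hu : 0 < u := hu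
  have h1 : 0 < 1 + u := by positivity
  simp only
  have e : b - b * u / (1 + u) = b / (1 + u) := by field_simp; ring
  have e2 : (1 - β) = - (β - 1) := by ring
  rw [e, Real.div_rpow (by positivity) h1.le, Real.mul_rpow hb.le hu.le, e2,
    Real.div_rpow hb.le h1.le, Real.rpow_neg h1.le, Real.rpow_neg hb.le]
  have := Real.rpow_pos_of_pos h1 (β - 1)
  have := Real.rpow_pos_of_pos hb (β - 1)
  have h5 : y + b / (1 + u) = (y * (1 + u) + b) / (1 + u) := by field_simp
  have h6 : u + (y + b) / y = (y * (1 + u) + b) / y := by field_simp; ring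
  have h7 : 0 < y * (1 + u) + b := by positivity
  rw [h5, h6, add_comm u 1]
  generalize u ^ (β - 1) = U
  field_simp
  ring

lemma os_rpow_int (β : ℝ) (hβ0 : 0 < β) (p q : ℝ) (hpq : p ≤ q) :
    IntegrableOn (fun y : ℝ => y ^ (β - 1)) (Set.Ioo p q) := by
  have := intervalIntegral.intervalIntegrable_rpow' (a := p) (b := q) (r := β - 1) (by linarith)
  rw [intervalIntegrable_iff_integrableOn_Ioo_of_le hpq] at this
  exact this

lemma os_shift_int (β : ℝ) (hβ0 : 0 < β) (b s : ℝ) (hs : 0 < s) :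
    IntegrableOn (fun y : ℝ => (y + b) ^ (β - 1)) (Set.Ioo 0 s) := by
  have := (intervalIntegral.intervalIntegrable_rpow' (a := b) (b := s + b) (r := β - 1)
    (by linarith)).comp_add_right b
  rw [sub_self, add_sub_cancel_right, intervalIntegrable_iff_integrableOn_Ioo_of_le hs.le] at this
  exact this

lemma os_inner' (β : ℝ) (hβ0 : 0 < β) (hβ1 : β < 1) (b y : ℝ) (hb : 0 < b) (hy : 0 < y) :
    ∫ x in Set.Ioo (0 : ℝ) b, x ^ (β - 1) * ((b - x) ^ (1 - β) * (y + (b - x))⁻¹ * y ^ (β - 1))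
      = (y ^ (β - 1) - (y + b) ^ (β - 1)) * (π / Real.sin (π * β)) := by
  have h := os_inner β hβ0 hβ1 b y hb hy
  simp_rw [← mul_assoc] at h ⊢
  rw [integral_mul_const, h, Real.div_rpow (by positivity) hy.le]
  have := Real.rpow_pos_of_pos hy (β - 1)
  field_simp

lemma os_prod_int (β : ℝ) (hβ0 : 0 < β) (hβ1 : β < 1) (b s : ℝ) (hb : 0 < b) (hs : 0 < s) :
    Integrable (Function.uncurry fun x y : ℝ =>
        x ^ (β - 1) * ((b - x) ^ (1 - β) * (y + (b - x))⁻¹ * y ^ (β - 1)))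
      ((volume.restrict (Set.Ioo 0 b)).prod (volume.restrict (Set.Ioo 0 s))) := by
  rw [integrable_prod_iff']
  · constructor
    · filter_upwards [ae_restrict_mem measurableSet_Ioo] with y hy
      have h1 := intervalIntegral.intervalIntegrable_rpow' (a := 0) (b := b) (r := β - 1)
        (by linarith)
      have h2 : ContinuousOn (fun x : ℝ => (b - x) ^ (1 - β) * (y + (b - x))⁻¹ * y ^ (β - 1))
          (Set.uIcc 0 b) := by
        rw [Set.uIcc_of_le hb.le]
        refine ContinuousOn.mul (ContinuousOn.mul ?_ ?_) continuousOn_const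
        · exact ContinuousOn.rpow_const (by fun_prop) (fun x _ => Or.inr (by linarith))
        · refine ContinuousOn.inv₀ (by fun_prop) ?_
          intro x hx
          have := hx.2
          have := hy.1
          apply ne_of_gt
          linarith
      have h3 := h1.mul_continuousOn h2
      rw [intervalIntegrable_iff_integrableOn_Ioo_of_le hb.le] at h3
      exact h3
    · have h0 : IntegrableOn (fun y : ℝ =>
          (y ^ (β - 1) - (y + b) ^ (β - 1)) * (π / Real.sin (π * β))) (Set.Ioo 0 s) :=
        ((os_rpow_int β hβ0 0 s hs.le).sub (os_shift_int β hβ0 b s hs)).mul_const _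
      refine h0.congr_fun ?_ measurableSet_Ioo
      intro y hy
      simp only
      rw [← os_inner' β hβ0 hβ1 b y hb hy.1]
      refine setIntegral_congr_fun measurableSet_Ioo ?_
      intro x hx
      have h1 : 0 < b - x := by linarith [hx.2]
      have h2 := hx.1
      have h3 := hy.1
      simp only [Function.uncurry]
      rw [Real.norm_of_nonneg (by positivity)]
  · apply Measurable.aestronglyMeasurable
    unfold Function.uncurry
    fun_prop

lemma os_main (β : ℝ) (hβ0 : 0 < β) (hβ1 : β < 1) (b s : ℝ) (hb : 0 < b) (hs : 0 < s) :
    ∫ x in Set.Ioo (0 : ℝ) b, β * x ^ (β - 1) * overshootCDF β (b - x) s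
      = s ^ β - ((b + s) ^ β - b ^ β) := by
  have hsin := os_pos β hβ0 hβ1
  have hsin' : Real.sin (π * (1 - β)) = Real.sin (π * β) := by
    rw [mul_sub, mul_one, Real.sin_pi_sub]
  have hpi := Real.pi_pos
  have hsw := integral_integral_swap (os_prod_int β hβ0 hβ1 b s hb hs)
  have e1 : ∫ x in Set.Ioo (0 : ℝ) b, β * x ^ (β - 1) * overshootCDF β (b - x) s
      = (β * (Real.sin (π * β) / π)) * ∫ x in Set.Ioo (0 : ℝ) b, ∫ y in Set.Ioo (0 : ℝ) s,
        x ^ (β - 1) * ((b - x) ^ (1 - β) * (y + (b - x))⁻¹ * y ^ (β - 1)) := by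
    rw [← integral_const_mul]
    congr 1
    ext x
    rw [overshootCDF, hsin', integral_const_mul]
    ring
  have e2 : ∫ y in Set.Ioo (0 : ℝ) s, ∫ x in Set.Ioo (0 : ℝ) b,
        x ^ (β - 1) * ((b - x) ^ (1 - β) * (y + (b - x))⁻¹ * y ^ (β - 1))
      = ∫ y in Set.Ioo (0 : ℝ) s,
        (y ^ (β - 1) - (y + b) ^ (β - 1)) * (π / Real.sin (π * β)) :=
    setIntegral_congr_fun measurableSet_Ioo fun y hy => os_inner' β hβ0 hβ1 b y hb hy.1
  rw [e1, hsw, e2, integral_mul_const,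
    integral_sub (os_rpow_int β hβ0 0 s hs.le) (os_shift_int β hβ0 b s hs),
    ← integral_Ioc_eq_integral_Ioo, ← integral_Ioc_eq_integral_Ioo,
    ← intervalIntegral.integral_of_le hs.le, ← intervalIntegral.integral_of_le hs.le,
    intervalIntegral.integral_comp_add_right (fun y : ℝ => y ^ (β - 1)) b,
    integral_rpow (Or.inl (by linarith)), integral_rpow (Or.inl (by linarith))]
  rw [sub_add_cancel, Real.zero_rpow hβ0.ne', zero_add, add_comm s b]
  generalize Real.sin (π * β) = S at hsin ⊢
  field_simp
  ring

/-- The shift-invariance identity (single-interval case of Proposition 3.1(c)):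
for `0<β<1`, `0<b<c` and `r>0`,
`∫₀^b βx^{β−1} F_{b−x}(c−b) dx + (c^β − b^β)
  = ∫₀^{b+r} βx^{β−1} F_{b+r−x}(c−b) dx + ((c+r)^β − (b+r)^β)`. -/
theorem overshoot_shift_invariance (β : ℝ) (hβ0 : 0 < β) (hβ1 : β < 1)
    (b c r : ℝ) (hb : 0 < b) (hbc : b < c) (hr : 0 < r) :
    (∫ x in Set.Ioo (0 : ℝ) b, β * x ^ (β - 1) * overshootCDF β (b - x) (c - b))
        + (c ^ β - b ^ β)
      = (∫ x in Set.Ioo (0 : ℝ) (b + r), β * x ^ (β - 1) * overshootCDF β (b + r - x) (c - b))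
        + ((c + r) ^ β - (b + r) ^ β) := by
  rw [os_main β hβ0 hβ1 b (c - b) hb (by linarith),
    os_main β hβ0 hβ1 (b + r) (c - b) (by linarith) (by linarith)]
  have h1 : b + (c - b) = c := by ring
  have h2 : b + r + (c - b) = c + r := by ring
  rw [h1, h2]
  ring
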